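/- The function U satisfies, for every (a,b) ∈ ℝ², the nonlinear ordinary differential relation a = U(a,b)·b − U(a,b)³ + 6·U(a,b)·U_a(a,b) − 4·U_aa(a,b), where subscripts denote partial derivatives with respect to a. -/

import Mathlib

noncomputable section

open MeasureTheory

/-- Partial derivative in the first argument of a curried 2-variable function. -/
def qd1 (f : ℝ → ℝ → ℝ) (a b : ℝ) : ℝ := deriv (fun s => f s b) a

/-- The Pearcey weight `exp(-(z⁴ - 2bz² + 4az)/8)`. -/
def pearceyW (a b z : ℝ) : ℝ := Real.exp (-(z ^ 4 - 2 * b * z ^ 2 + 4 * a * z) / 8)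

/-- The Pearcey-type function `U(a,b) = -2 ∂_a log I(a,b)`, which equals
`(∫ z · weight)/(∫ weight)`. -/
def pearceyU (a b : ℝ) : ℝ :=
  (∫ z : ℝ, z * pearceyW a b z) / (∫ z : ℝ, pearceyW a b z)


/-- Gaussian bound for the monomials against the Pearcey weight, locally uniform in `s`. -/
lemma pearcey_bound (n : ℕ) (c b s z : ℝ) (hs : |s| ≤ c) :
    ‖z ^ n * pearceyW s b z‖ ≤
      (n.factorial * Real.exp ((c / 2 + 1) ^ 2 + 2 * (b / 4 + 2) ^ 2)) *
        Real.exp (-1 * z ^ 2) := by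
  have h1 : |z| ^ n ≤ n.factorial * Real.exp |z| := by
    have h := Real.pow_div_factorial_le_exp |z| (abs_nonneg z) n
    have hp : (0 : ℝ) < n.factorial := by exact_mod_cast n.factorial_pos
    rw [div_le_iff₀ hp] at h
    linarith
  have hsz : -(s * z) ≤ c * |z| := by
    have h2 : -(s * z) ≤ |s| * |z| := by
      rw [← abs_mul]; exact neg_le_abs _
    exact h2.trans (mul_le_mul_of_nonneg_right hs (abs_nonneg z))
  have hzz : |z| ^ 2 = z ^ 2 := sq_abs z
  have h3 : |z| + -(z ^ 4 - 2 * b * z ^ 2 + 4 * s * z) / 8 ≤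
      (c / 2 + 1) ^ 2 + 2 * (b / 4 + 2) ^ 2 + -1 * z ^ 2 := by
    nlinarith [sq_nonneg (|z| - 2 * (c / 2 + 1)), sq_nonneg (z ^ 2 - 4 * (b / 4 + 2)),
      sq_nonneg z, sq_nonneg (c / 2 + 1)]
  rw [norm_mul, norm_pow, Real.norm_eq_abs, Real.norm_eq_abs]
  unfold pearceyW
  rw [Real.abs_exp, mul_assoc (n.factorial : ℝ), ← Real.exp_add]
  calc |z| ^ n * Real.exp (-(z ^ 4 - 2 * b * z ^ 2 + 4 * s * z) / 8)
      ≤ (n.factorial * Real.exp |z|) * Real.exp (-(z ^ 4 - 2 * b * z ^ 2 + 4 * s * z) / 8) := by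
        gcongr
    _ = n.factorial * Real.exp (|z| + -(z ^ 4 - 2 * b * z ^ 2 + 4 * s * z) / 8) := by
        rw [Real.exp_add, mul_assoc]
    _ ≤ _ := by gcongr

lemma pearcey_cont (n : ℕ) (b s : ℝ) : Continuous (fun z : ℝ => z ^ n * pearceyW s b z) := by
  unfold pearceyW
  fun_prop

lemma pearcey_int (n : ℕ) (b s : ℝ) : Integrable (fun z : ℝ => z ^ n * pearceyW s b z) :=
  Integrable.mono' ((integrable_exp_neg_mul_sq one_pos).const_mul _)
    (pearcey_cont n b s).aestronglyMeasurable
    (Filter.Eventually.of_forall fun z => pearcey_bound n |s| b s z le_rfl)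

/-- The moments of the Pearcey weight. -/
def pearceyM (n : ℕ) (b s : ℝ) : ℝ := ∫ z : ℝ, z ^ n * pearceyW s b z

lemma pearceyM_deriv (n : ℕ) (b s : ℝ) :
    HasDerivAt (pearceyM n b) (-(1 / 2) * pearceyM (n + 1) b s) s := by
  have key := hasDerivAt_integral_of_dominated_loc_of_deriv_le (μ := volume)
    (F := fun t z : ℝ => z ^ n * pearceyW t b z)
    (F' := fun t z : ℝ => -(1 / 2) * (z ^ (n + 1) * pearceyW t b z)) (x₀ := s)
    (bound := fun z => (1 / 2) * ((((n + 1).factorial : ℝ) *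
      Real.exp (((|s| + 1) / 2 + 1) ^ 2 + 2 * (b / 4 + 2) ^ 2)) * Real.exp (-1 * z ^ 2)))
    (Metric.ball_mem_nhds s one_pos)
    (Filter.Eventually.of_forall fun t => (pearcey_cont n b t).aestronglyMeasurable)
    (pearcey_int n b s)
    ((pearcey_cont (n + 1) b s).const_mul _).aestronglyMeasurable
    (Filter.Eventually.of_forall fun z t ht => by
      have hb := pearcey_bound (n + 1) (|s| + 1) b t z (by
        rw [Metric.mem_ball, Real.dist_eq] at ht
        have := abs_sub_abs_le_abs_sub t s
        linarith)
      rw [norm_mul]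
      have : ‖(-(1 / 2) : ℝ)‖ = 1 / 2 := by norm_num
      rw [this]
      gcongr)
    (((integrable_exp_neg_mul_sq one_pos).const_mul _).const_mul _)
    (Filter.Eventually.of_forall fun z t _ => by
      unfold pearceyW
      have h : HasDerivAt (fun t : ℝ => -(z ^ 4 - 2 * b * z ^ 2 + 4 * t * z) / 8)
          (-(4 * 1 * z) / 8) t :=
        (((((hasDerivAt_id t).const_mul 4).mul_const z).const_add _).neg).div_const 8
      refine (h.exp.const_mul (z ^ n)).congr_deriv ?_
      ring)
  have h2 := key.2
  rw [integral_const_mul] at h2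
  exact h2

lemma pearceyM_zero_pos (b s : ℝ) : 0 < pearceyM 0 b s := by
  unfold pearceyM
  refine integral_pos_of_integrable_nonneg_nonzero (x := 0) (pearcey_cont 0 b s)
    (pearcey_int 0 b s) (fun z => ?_) ?_
  · simp [pearceyW, Real.exp_nonneg]
  · simp [pearceyW]

lemma pearceyM_rel (b s : ℝ) : pearceyM 3 b s - b * pearceyM 1 b s + s * pearceyM 0 b s = 0 := by
  have hI : Integrable (fun z : ℝ => -(1 / 2) * (z ^ 3 * pearceyW s b z -
      b * (z ^ 1 * pearceyW s b z) + s * (z ^ 0 * pearceyW s b z))) := (((pearcey_int 3 b s).sub ((pearcey_int 1 b s).const_mul b)).add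
    ((pearcey_int 0 b s).const_mul s)).const_mul (-(1 / 2))
  have h0 := integral_eq_zero_of_hasDerivAt_of_integrable (f := fun z => z ^ 0 * pearceyW s b z)
    (fun z => by
      have h : HasDerivAt (fun z : ℝ => -(z ^ 4 - 2 * b * z ^ 2 + 4 * s * z) / 8)
          (-(((4 : ℕ) * z ^ 3 - 2 * b * ((2 : ℕ) * z ^ 1)) + 4 * s * 1) / 8) z :=
        ((((hasDerivAt_pow 4 z).sub ((hasDerivAt_pow 2 z).const_mul (2 * b))).add
          ((hasDerivAt_id z).const_mul (4 * s))).neg).div_const 8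
      have h' := h.exp
      have hf : (fun z : ℝ => z ^ 0 * pearceyW s b z) =
          fun z : ℝ => Real.exp (-(z ^ 4 - 2 * b * z ^ 2 + 4 * s * z) / 8) := by
        funext y
        simp [pearceyW]
      rw [hf]
      refine h'.congr_deriv (g' := -(1 / 2) *
        (z ^ 3 * pearceyW s b z - b * (z ^ 1 * pearceyW s b z) + s * (z ^ 0 * pearceyW s b z))) ?_
      unfold pearceyW
      push_cast
      ring) hI (pearcey_int 0 b s)
  have hsub : Integrable (fun z : ℝ => z ^ 3 * pearceyW s b z - b * (z ^ 1 * pearceyW s b z)) :=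
    (pearcey_int 3 b s).sub ((pearcey_int 1 b s).const_mul b)
  rw [integral_const_mul, integral_add hsub
    ((pearcey_int 0 b s).const_mul s), integral_sub (pearcey_int 3 b s)
    ((pearcey_int 1 b s).const_mul b), integral_const_mul, integral_const_mul] at h0
  unfold pearceyM
  linarith

lemma pearceyU_eq (a b : ℝ) : pearceyU a b = pearceyM 1 b a / pearceyM 0 b a := by
  simp [pearceyU, pearceyM]

lemma pearceyU_qd1 (a b : ℝ) : qd1 pearceyU a b =
    -(1 / 2) * (pearceyM 2 b a / pearceyM 0 b a - (pearceyM 1 b a / pearceyM 0 b a) ^ 2) := by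
  have h0 := (pearceyM_zero_pos b a).ne'
  unfold qd1
  simp only [pearceyU_eq]
  refine (((pearceyM_deriv 1 b a).div (pearceyM_deriv 0 b a) h0).congr_deriv ?_).deriv
  field_simp
  ring

lemma pearceyU_qd2 (a b : ℝ) : qd1 (qd1 pearceyU) a b =
    1 / 4 * (pearceyM 3 b a / pearceyM 0 b a)
    - 3 / 4 * (pearceyM 2 b a / pearceyM 0 b a) * (pearceyM 1 b a / pearceyM 0 b a)
    + 1 / 2 * (pearceyM 1 b a / pearceyM 0 b a) ^ 3 := by
  have h0 := (pearceyM_zero_pos b a).ne'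
  rw [qd1]
  simp only [pearceyU_qd1]
  refine (((((pearceyM_deriv 2 b a).div (pearceyM_deriv 0 b a) h0).sub
    (((pearceyM_deriv 1 b a).div (pearceyM_deriv 0 b a) h0).pow 2)).const_mul
      (-(1 / 2))).congr_deriv ?_).deriv
  simp only [Pi.div_apply, Nat.cast_ofNat, Nat.add_one_sub_one, pow_one]
  field_simp
  ring

/-- The Pearcey-type function `U` satisfies the nonlinear ODE relation
`a = U b - U³ + 6 U U_a - 4 U_aa` at every point of ℝ². -/
theorem pearceyU_nonlinear_ode (a b : ℝ) :
    a = pearceyU a b * b - (pearceyU a b) ^ 3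
        + 6 * pearceyU a b * qd1 pearceyU a b
        - 4 * qd1 (qd1 pearceyU) a b := by
  have h0 := (pearceyM_zero_pos b a).ne'
  have hr := pearceyM_rel b a
  rw [pearceyU_qd2, pearceyU_qd1, pearceyU_eq]
  have h3 : pearceyM 3 b a / pearceyM 0 b a = b * (pearceyM 1 b a / pearceyM 0 b a) - a := by
    field_simp
    linarith
  rw [h3]
  ring
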